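/- Let X be a finite set with n ≥ 2 elements, and let S = (P(X), ∩) be the power set of X regarded as a commutative semigroup under intersection, with zero element ∅. Then χ(Γ(S)) = ω(Γ(S)) = n. -/

import Mathlib

/-- A commutative semigroup with a zero element. -/
class CommSemigroupWithZero (S : Type*) extends SemigroupWithZero S where
  mul_comm : ∀ a b : S, a * b = b * a

variable (S : Type*) [CommSemigroupWithZero S]

/-- The set of zero-divisors of `S`. -/
def zdivs : Set S := {x | ∃ y, y ≠ 0 ∧ x * y = 0}

/-- The vertex set `Z(S)* = Z(S) \ {0}` of the zero-divisor graph. -/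
def zdVerts : Set S := {x | x ≠ 0 ∧ x ∈ zdivs S}

/-- The zero-divisor graph `Γ(S)`. -/
def zdGraph : SimpleGraph (zdVerts S) where
  Adj x y := x ≠ y ∧ (x : S) * y = 0
  symm := by
    refine ⟨?_⟩
    rintro x y ⟨hne, h⟩
    exact ⟨hne.symm, by rw [CommSemigroupWithZero.mul_comm]; exact h⟩
  loopless := ⟨fun x h => h.1 rfl⟩

/-- `I` is an ideal of the semigroup `S`. -/
def IsIdeal (I : Set S) : Prop := I.Nonempty ∧ ∀ x ∈ I, ∀ s : S, x * s ∈ I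

/-- `p` is a prime ideal of the semigroup `S`. -/
def IsPrimeIdeal (p : Set S) : Prop :=
  IsIdeal S p ∧ ∀ x y : S, (∀ s : S, x * s * y ∈ p) → x ∈ p ∨ y ∈ p

/-- `x` is nilpotent: `x ^ (n + 1) = 0` for some `n`. -/
def IsNil (x : S) : Prop := ∃ n : ℕ, (fun y => x * y)^[n] x = 0

/-- The annihilator of `a`. -/
def Ann (a : S) : Set S := {s | s * a = 0}

/-- The set of associated primes of `S`. -/
def Ass : Set (Set S) := {p | IsPrimeIdeal S p ∧ ∃ x : S, p = Ann S x}


/-- The power set of `X`, regarded as a commutative semigroup under intersection,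
with zero element `∅`. -/
instance powerSetSemigroup (X : Type*) : CommSemigroupWithZero (Set X) where
  mul a b := a ∩ b
  mul_assoc := Set.inter_assoc
  zero := ∅
  zero_mul := Set.empty_inter
  mul_zero := Set.inter_empty
  mul_comm := Set.inter_comm

/-- For a finite set `X` with `n ≥ 2` elements and
`S = (P(X), ∩)`, we have `χ(Γ(S)) = ω(Γ(S)) = n` (the clique number equals `n`:
there is a clique of size `n` and every clique has at most `n` vertices). -/
theorem powerset_chromatic_eq_clique_eq_card (X : Type*) [Fintype X]
    (n : ℕ) (hn : 2 ≤ n) (hcard : Fintype.card X = n) :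
    (zdGraph (Set X)).chromaticNumber = n ∧
      (∃ T : Finset (zdVerts (Set X)), (zdGraph (Set X)).IsNClique n T) ∧
      (∀ T : Finset (zdVerts (Set X)), (zdGraph (Set X)).IsClique ↑T → T.card ≤ n) := by
  classical
  have key : ∀ x y : Set X, x * y = 0 ↔ x ∩ y = ∅ := fun x y => Iff.rfl
  have hne : ∀ v : zdVerts (Set X), ∃ a, a ∈ (v : Set X) := fun v =>
    Set.nonempty_iff_ne_empty.mpr v.2.1
  choose f hf using hne
  have hcol : (zdGraph (Set X)).Colorable n := by
    rw [← hcard]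
    refine (SimpleGraph.Coloring.mk f ?_ : (zdGraph (Set X)).Coloring X).colorable
    intro v w hvw heq
    have h0 : (v : Set X) ∩ (w : Set X) = ∅ := (key _ _).1 hvw.2
    have hm : f v ∈ (v : Set X) ∩ (w : Set X) := ⟨hf v, heq ▸ hf w⟩
    rw [h0] at hm
    exact hm
  have hsing : ∀ a : X, ({a} : Set X) ∈ zdVerts (Set X) := by
    intro a
    have : Nontrivial X := Fintype.one_lt_card_iff_nontrivial.1 (by omega)
    obtain ⟨b, hb⟩ := exists_ne a
    refine ⟨Set.singleton_ne_empty a, {b}, Set.singleton_ne_empty b, (key _ _).2 ?_⟩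
    simpa using hb
  have hinj : Function.Injective (fun a : X => (⟨{a}, hsing a⟩ : zdVerts (Set X))) := by
    intro a b h
    exact Set.singleton_injective (congrArg Subtype.val h)
  have hT : (zdGraph (Set X)).IsNClique n (Finset.univ.map ⟨_, hinj⟩) := by
    constructor
    · intro v hv w hw hvw
      simp only [Finset.coe_map, Set.mem_image, Function.Embedding.coeFn_mk] at hv hw
      obtain ⟨a, -, rfl⟩ := hv
      obtain ⟨b, -, rfl⟩ := hw
      refine ⟨hvw, (key _ _).2 ?_⟩
      have hab : a ≠ b := fun h => hvw (by rw [h])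
      simpa using hab.symm
    · simp [hcard]
  refine ⟨le_antisymm hcol.chromaticNumber_le ?_, ⟨_, hT⟩,
    fun T h => h.card_le_of_colorable hcol⟩
  have := hT.1.card_le_chromaticNumber
  rwa [hT.2] at this
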